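/- Fix ε > 0 and b ≥ 5ε, and for each nonnegative integer n set χ_{n,ε,b}(x) = x^n · χ_{0,ε,b}(x). Then for every nonnegative integer n and all x ∈ ℝ, χ_{n+1,ε,b}'(x) ≥ (n+1) · χ_{n,ε,b}(x). -/

import Mathlib

open MeasureTheory Set

/-- The rescaled mollifier `ρ_ε(x) = ε⁻¹ ρ(x/ε)`. -/
noncomputable def mollifier (ρ : ℝ → ℝ) (ε : ℝ) (x : ℝ) : ℝ := ε⁻¹ * ρ (x / ε)

/-- The piecewise linear ramp `ν_{ε,b}`. -/
noncomputable def nuFun (ε b : ℝ) (x : ℝ) : ℝ :=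
  if x ≤ 2 * ε then 0 else if x ≤ b - ε then (x - 2 * ε) / (b - 3 * ε) else 1

/-- The cut-off function `χ_{0,ε,b} = ρ_ε ∗ ν_{ε,b}`. -/
noncomputable def chi0 (ρ : ℝ → ℝ) (ε b : ℝ) (x : ℝ) : ℝ :=
  ∫ y : ℝ, mollifier ρ ε (x - y) * nuFun ε b y

/-- The weighted cut-off `χ_{n,ε,b}(x) = x^n χ_{0,ε,b}(x)`. -/
noncomputable def chiN (ρ : ℝ → ℝ) (n : ℕ) (ε b : ℝ) (x : ℝ) : ℝ :=
  x ^ n * chi0 ρ ε b x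

/-!
The mollified ramp `χ₀ = ρ_ε ∗ ν` is monotone, being the convolution of a monotone function with a
nonnegative kernel. It vanishes on the negative half-line, since `ν` vanishes up to `2 * ε` and
`ρ_ε` vanishes to the left of `-2 * ε`. Hence `x ^ (n + 1) * χ₀' x ≥ 0` for every `x`, and the
product rule
`(x ^ (n + 1) * χ₀)' = (n + 1) * x ^ n * χ₀ + x ^ (n + 1) * χ₀'` gives the inequality.
-/

open Function ContinuousLinearMap
open scoped Convolution Pointwise

theorem monotone_convolution {G : Type*} [AddGroup G] [Preorder G] [AddRightMono G]
    [MeasurableSpace G] {μ : Measure G} {f g : G → ℝ}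
    (hfg : ConvolutionExists f g (mul ℝ ℝ) μ) (hf : ∀ x, 0 ≤ f x) (hg : Monotone g) :
    Monotone (f ⋆[mul ℝ ℝ, μ] g) := fun x y hxy =>
  integral_mono (hfg x) (hfg y) fun t =>
    mul_le_mul_of_nonneg_left (hg (sub_le_sub_right hxy t)) (hf t)

theorem pow_succ_mul_deriv_nonneg {f : ℝ → ℝ} (hf : Monotone f) (hf₀ : support f ⊆ Ici 0)
    (n : ℕ) (x : ℝ) : 0 ≤ x ^ (n + 1) * deriv f x := by
  have support_deriv : support (deriv f) ⊆ Ici 0 :=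
    support_deriv_subset.trans (closure_minimal hf₀ isClosed_Ici)
  by_cases hx : deriv f x = 0
  · rw [hx, mul_zero]
  · exact mul_nonneg (pow_nonneg (support_deriv hx) _) hf.deriv_nonneg

theorem succ_mul_pow_mul_le_deriv_pow_succ_mul {f : ℝ → ℝ} {x : ℝ} (hf : Monotone f)
    (hf₀ : support f ⊆ Ici 0) (hfx : DifferentiableAt ℝ f x) (n : ℕ) :
    (n + 1) * (x ^ n * f x) ≤ deriv (fun y => y ^ (n + 1) * f y) x :=
  calc (n + 1) * (x ^ n * f x)
      ≤ (n + 1) * (x ^ n * f x) + x ^ (n + 1) * deriv f x :=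
        le_add_of_nonneg_right (pow_succ_mul_deriv_nonneg hf hf₀ n x)
    _ = ((n + 1 : ℕ) : ℝ) * x ^ n * f x + x ^ (n + 1) * deriv f x := by push_cast; ring
    _ = deriv (fun y => y ^ (n + 1) * f y) x :=
        ((hasDerivAt_pow (n + 1) x).mul hfx.hasDerivAt).deriv.symm

theorem nuFun_monotone (ε b : ℝ) : Monotone (nuFun ε b) := by
  intro x y hxy
  unfold nuFun
  split_ifs with hx₀ hy₀ hy₁ hx₁ hy₀ hy₁ hy₀ hy₁
  · exact le_rfl
  · exact div_nonneg (by linarith) (by linarith)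
  · exact zero_le_one
  · exact absurd (hxy.trans hy₀) hx₀
  · exact div_le_div_of_nonneg_right (by linarith) (by linarith)
  · exact div_le_one_of_le₀ (by linarith) (by linarith)
  · exact absurd (hxy.trans hy₀) hx₀
  · exact absurd (hxy.trans hy₁) hx₁
  · exact le_rfl

theorem support_nuFun_subset (ε b : ℝ) : support (nuFun ε b) ⊆ Ioi (2 * ε) := fun _ hx =>
  not_le.mp fun hle => hx (if_pos hle)

section Mollifier

variable {ρ : ℝ → ℝ} {ε : ℝ}

theorem mollifier_nonneg (hρ : ∀ x, 0 ≤ ρ x) (hε : 0 ≤ ε) (x : ℝ) : 0 ≤ mollifier ρ ε x :=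
  mul_nonneg (inv_nonneg.mpr hε) (hρ _)

theorem contDiff_mollifier {k : WithTop ℕ∞} (hρ : ContDiff ℝ k ρ) (ε : ℝ) :
    ContDiff ℝ k (mollifier ρ ε) :=
  contDiff_const.mul (hρ.comp (contDiff_id.div_const ε))

theorem hasCompactSupport_mollifier (hρ : HasCompactSupport ρ) (hε : ε ≠ 0) :
    HasCompactSupport (mollifier ρ ε) := by
  have comp_div : HasCompactSupport fun x => ρ (x / ε) := by
    simpa only [smul_eq_mul, inv_mul_eq_div] using hρ.comp_smul (inv_ne_zero hε)
  exact comp_div.mul_left (f := fun _ => ε⁻¹)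

theorem support_mollifier_subset {a : ℝ} (hρ : support ρ ⊆ Ici a) (hε : 0 < ε) :
    support (mollifier ρ ε) ⊆ Ici (a * ε) := fun _ hx =>
  (le_div_iff₀ hε).mp (hρ (right_ne_zero_of_mul hx))

end Mollifier

section Chi

variable {ρ : ℝ → ℝ} {ε : ℝ}

theorem chi0_eq_convolution (ρ : ℝ → ℝ) (ε b : ℝ) :
    chi0 ρ ε b = mollifier ρ ε ⋆[mul ℝ ℝ] nuFun ε b :=
  funext fun _ => convolution_mul_swap.symm

theorem chi0_monotone (hρ : Continuous ρ) (hρc : HasCompactSupport ρ) (hρ₀ : ∀ x, 0 ≤ ρ x)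
    (hε : 0 < ε) (b : ℝ) : Monotone (chi0 ρ ε b) := by
  have hν := nuFun_monotone ε b
  have mollifier_continuous : Continuous (mollifier ρ ε) :=
    (contDiff_mollifier (contDiff_zero.mpr hρ) ε).continuous
  rw [chi0_eq_convolution]
  exact monotone_convolution
    ((hasCompactSupport_mollifier hρc hε.ne').convolutionExists_left _ mollifier_continuous
      hν.locallyIntegrable)
    (mollifier_nonneg hρ₀ hε.le) hν

theorem contDiff_chi0 {k : ℕ∞} (hρ : ContDiff ℝ k ρ) (hρc : HasCompactSupport ρ) (hε : ε ≠ 0)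
    (b : ℝ) : ContDiff ℝ k (chi0 ρ ε b) := by
  rw [chi0_eq_convolution]
  exact (hasCompactSupport_mollifier hρc hε).contDiff_convolution_left _
    (contDiff_mollifier hρ ε) (nuFun_monotone ε b).locallyIntegrable

theorem support_chi0_subset {a : ℝ} (hρ : support ρ ⊆ Ici a) (hε : 0 < ε) (b : ℝ) :
    support (chi0 ρ ε b) ⊆ Ioi (a * ε + 2 * ε) := by
  rw [chi0_eq_convolution]
  exact (support_convolution_subset _).trans <|
    (add_subset_add (support_mollifier_subset hρ hε) (support_nuFun_subset ε b)).trans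
      (Ici_add_Ioi_subset _ _)

end Chi

theorem statement4_general {ρ : ℝ → ℝ} (hρs : ContDiff ℝ 1 ρ) (hρc : HasCompactSupport ρ)
    (hρ₀ : ∀ x, 0 ≤ ρ x) (hρsupp : support ρ ⊆ Ici (-2)) {ε : ℝ} (hε : 0 < ε) (b : ℝ)
    (n : ℕ) (x : ℝ) :
    ((n : ℝ) + 1) * chiN ρ n ε b x ≤ deriv (chiN ρ (n + 1) ε b) x := by
  have support_chi0 : support (chi0 ρ ε b) ⊆ Ici 0 := by
    simpa only [neg_mul, neg_add_cancel] using
      (support_chi0_subset hρsupp hε b).trans Ioi_subset_Ici_self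
  have differentiable_chi0 : Differentiable ℝ (chi0 ρ ε b) :=
    (contDiff_chi0 (k := 1) hρs hρc hε.ne' b).differentiable one_ne_zero
  exact succ_mul_pow_mul_le_deriv_pow_succ_mul (chi0_monotone hρs.continuous hρc hρ₀ hε b)
    support_chi0 (differentiable_chi0 x) n

theorem statement4 (ρ : ℝ → ℝ) (hρs : ContDiff ℝ (⊤ : ℕ∞) ρ) (hρc : HasCompactSupport ρ)
    (hρ0 : ∀ x, 0 ≤ ρ x) (hρe : ∀ x, ρ (-x) = ρ x)
    (hρsupp : Function.support ρ ⊆ Set.Ioo (-1) 1) (hρint : ∫ x : ℝ, ρ x = 1)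
    (ε b : ℝ) (hε : 0 < ε) (hb : 5 * ε ≤ b) :
    ∀ n : ℕ, ∀ x : ℝ,
      ((n : ℝ) + 1) * chiN ρ n ε b x ≤ deriv (chiN ρ (n + 1) ε b) x := by
  have support_subset : support ρ ⊆ Ici (-2) :=
    hρsupp.trans (Ioo_subset_Ioi_self.trans (Ioi_subset_Ici (by norm_num)))
  exact statement4_general (hρs.of_le (mod_cast le_top)) hρc hρ0 support_subset hε b
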